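/- Let ℓ > 0 and let q : ℝ → ℝ be integrable and nonnegative on [0, ℓ]. Then there exists a continuously differentiable function f : ℝ → ℝ with f(0) = f(ℓ) = 0 and ∫₀^ℓ f(t)² dt = 1 such that ∫₀^ℓ f′(t)² dt + ∫₀^ℓ q(t) f(t)² dt ≤ (π/ℓ + ∫₀^ℓ q(t) dt)² − (∫₀^ℓ q(t) dt)². (One may take f(x) = √(2/ℓ) · sin(πx/ℓ).) -/

import Mathlib

open Real MeasureTheory intervalIntegral

/-- On `[0, ℓ]` with an integrable nonnegative potential `q`, there is a
normalized continuously differentiable test function vanishing at both endpoints whose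
Schrödinger energy is at most `(π/ℓ + ∫₀^ℓ q)² − (∫₀^ℓ q)²`. -/
theorem exists_test_function_rayleigh_bound (ℓ : ℝ) (hℓ : 0 < ℓ) (q : ℝ → ℝ)
    (hq_int : IntegrableOn q (Set.Icc (0 : ℝ) ℓ))
    (hq_nonneg : ∀ t ∈ Set.Icc (0 : ℝ) ℓ, 0 ≤ q t) :
    ∃ f : ℝ → ℝ, ContDiff ℝ 1 f ∧ f 0 = 0 ∧ f ℓ = 0 ∧
      (∫ t in (0 : ℝ)..ℓ, (f t) ^ 2) = 1 ∧
      (∫ t in (0 : ℝ)..ℓ, (deriv f t) ^ 2) + (∫ t in (0 : ℝ)..ℓ, q t * (f t) ^ 2)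
        ≤ (Real.pi / ℓ + ∫ t in (0 : ℝ)..ℓ, q t) ^ 2
          - (∫ t in (0 : ℝ)..ℓ, q t) ^ 2 := by
  have hl : ℓ ≠ 0 := hℓ.ne'
  have hpi : Real.pi ≠ 0 := Real.pi_ne_zero
  have hc : Real.pi / ℓ ≠ 0 := div_ne_zero hpi hl
  have hs : (√(2 / ℓ)) ^ 2 = 2 / ℓ := Real.sq_sqrt (by positivity)
  have hend : ℓ * (Real.pi / ℓ) = Real.pi := by field_simp
  have hder : ∀ t : ℝ, deriv (fun x : ℝ => √(2 / ℓ) * Real.sin (x * (Real.pi / ℓ))) t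
      = √(2 / ℓ) * (Real.cos (t * (Real.pi / ℓ)) * (Real.pi / ℓ)) := by
    intro t
    have h1 : HasDerivAt (fun x : ℝ => x * (Real.pi / ℓ)) (Real.pi / ℓ) t := by
      simpa using (hasDerivAt_id t).mul_const (Real.pi / ℓ)
    exact (h1.sin.const_mul (√(2 / ℓ))).deriv
  have hsin : (∫ t in (0 : ℝ)..ℓ, Real.sin (t * (Real.pi / ℓ)) ^ 2) = ℓ / 2 := by
    rw [intervalIntegral.integral_comp_mul_right (fun x => Real.sin x ^ 2) hc, hend,
      integral_sin_sq]
    simp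
    field_simp
  have hcos : (∫ t in (0 : ℝ)..ℓ, Real.cos (t * (Real.pi / ℓ)) ^ 2) = ℓ / 2 := by
    rw [intervalIntegral.integral_comp_mul_right (fun x => Real.cos x ^ 2) hc, hend,
      integral_cos_sq]
    simp
    field_simp
  have hqi : IntervalIntegrable q volume 0 ℓ :=
    (intervalIntegrable_iff_integrableOn_Icc_of_le hℓ.le).2 hq_int
  have hq0 : 0 ≤ ∫ t in (0 : ℝ)..ℓ, q t :=
    intervalIntegral.integral_nonneg hℓ.le hq_nonneg
  refine ⟨fun x => √(2 / ℓ) * Real.sin (x * (Real.pi / ℓ)), by fun_prop, by simp,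
    by simp [hend], ?_, ?_⟩
  · simp only [mul_pow, hs]
    rw [intervalIntegral.integral_const_mul, hsin]
    field_simp
  · have e1 : (∫ t in (0 : ℝ)..ℓ,
        (deriv (fun x : ℝ => √(2 / ℓ) * Real.sin (x * (Real.pi / ℓ))) t) ^ 2)
        = (Real.pi / ℓ) ^ 2 := by
      simp only [hder, mul_pow, hs]
      rw [intervalIntegral.integral_const_mul, intervalIntegral.integral_mul_const, hcos]
      field_simp
    have e2 : (∫ t in (0 : ℝ)..ℓ, q t * (√(2 / ℓ) * Real.sin (t * (Real.pi / ℓ))) ^ 2)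
        ≤ ∫ t in (0 : ℝ)..ℓ, q t * (2 / ℓ) := by
      apply intervalIntegral.integral_mono_on hℓ.le
      · exact hqi.mul_continuousOn (by fun_prop)
      · exact hqi.mul_const _
      · intro t ht
        apply mul_le_mul_of_nonneg_left _ (hq_nonneg t ht)
        rw [mul_pow, hs]
        exact mul_le_of_le_one_right (by positivity) (Real.sin_sq_le_one _)
    rw [intervalIntegral.integral_mul_const] at e2
    have e3 : 2 / ℓ ≤ 2 * (Real.pi / ℓ) := by
      rw [← mul_div_assoc]
      gcongr
      linarith [Real.pi_gt_three]
    have e4 := mul_le_mul_of_nonneg_left e3 hq0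
    rw [e1]
    linarith
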